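/- Let G be a finite simple graph with vertex set V, let k be a positive integer, let T ⊆ V satisfy |Γ_T(Z)| ≥ k − 1 for every Steiner T-cut Z, and fix r ∈ T. Let D be the family of demand cuts, i.e., Steiner (T,r)-cuts X with |Γ_T(X)| = k − 1. For every min-core Z, the core family C(Z) is a ring family: for all X, Y ∈ C(Z), both X ∩ Y and X ∪ Y belong to C(Z). -/

import Mathlib

/-- `nbr G X` is Γ(X): the set of vertices outside `X` adjacent to a vertex of `X`. -/
def nbr {V : Type*} [Fintype V] [DecidableEq V] (G : SimpleGraph V) [DecidableRel G.Adj]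
    (X : Finset V) : Finset V :=
  Finset.univ.filter (fun v => v ∉ X ∧ ∃ u ∈ X, G.Adj u v)

/-- `cl G X` is X⁺ = X ∪ Γ(X). -/
def cl {V : Type*} [Fintype V] [DecidableEq V] (G : SimpleGraph V) [DecidableRel G.Adj]
    (X : Finset V) : Finset V :=
  X ∪ nbr G X

/-- A demand cut: a Steiner (T,r)-cut X with |Γ_T(X)| = k - 1. -/
def IsDemand {V : Type*} [Fintype V] [DecidableEq V] (G : SimpleGraph V) [DecidableRel G.Adj]
    (T : Finset V) (k : ℕ) (r : V) (X : Finset V) : Prop :=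
  (X ∩ T).Nonempty ∧ (T \ cl G X).Nonempty ∧ r ∉ cl G X ∧ (nbr G X ∩ T).card = k - 1

/-- A min-core: a minimal demand cut. -/
def IsMinCore {V : Type*} [Fintype V] [DecidableEq V] (G : SimpleGraph V) [DecidableRel G.Adj]
    (T : Finset V) (k : ℕ) (r : V) (X : Finset V) : Prop :=
  IsDemand G T k r X ∧ ∀ Y : Finset V, IsDemand G T k r Y → Y ⊆ X → Y = X

/-- A core: a demand cut containing exactly one min-core as a subset. -/
def IsCore {V : Type*} [Fintype V] [DecidableEq V] (G : SimpleGraph V) [DecidableRel G.Adj]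
    (T : Finset V) (k : ℕ) (r : V) (X : Finset V) : Prop :=
  IsDemand G T k r X ∧ ∃! Z : Finset V, IsMinCore G T k r Z ∧ Z ⊆ X

/-- The core family C(Z) of a min-core Z: the cores containing Z. -/
def coreFam {V : Type*} [Fintype V] [DecidableEq V] (G : SimpleGraph V) [DecidableRel G.Adj]
    (T : Finset V) (k : ℕ) (r : V) (Z : Finset V) : Set (Finset V) :=
  {X | IsCore G T k r X ∧ Z ⊆ X}

theorem mem_nbr_aux {V : Type*} [Fintype V] [DecidableEq V] (G : SimpleGraph V)
    [DecidableRel G.Adj] (X : Finset V) (v : V) :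
    v ∈ nbr G X ↔ v ∉ X ∧ ∃ u ∈ X, G.Adj u v := by
  simp [nbr]

theorem nbr_submod_aux {V : Type*} [Fintype V] [DecidableEq V] (G : SimpleGraph V)
    [DecidableRel G.Adj] (T A B : Finset V) :
    (nbr G (A ∩ B) ∩ T).card + (nbr G (A ∪ B) ∩ T).card
      ≤ (nbr G A ∩ T).card + (nbr G B ∩ T).card := by
  rw [← Finset.card_union_add_card_inter, ← Finset.card_union_add_card_inter (nbr G A ∩ T)]
  apply Nat.add_le_add
  · apply Finset.card_le_card
    intro v hv
    simp only [Finset.mem_union, Finset.mem_inter, mem_nbr_aux] at hv ⊢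
    grind
  · apply Finset.card_le_card
    intro v hv
    simp only [Finset.mem_union, Finset.mem_inter, mem_nbr_aux] at hv ⊢
    grind

theorem demand_uncross_aux {V : Type*} [Fintype V] [DecidableEq V]
    (G : SimpleGraph V) [DecidableRel G.Adj] (k : ℕ) (T : Finset V)
    (hTconn : ∀ Z : Finset V, (Z ∩ T).Nonempty → (T \ cl G Z).Nonempty →
      k - 1 ≤ (nbr G Z ∩ T).card)
    (r : V) (hr : r ∈ T) (A B : Finset V) (hA : IsDemand G T k r A) (hB : IsDemand G T k r B)
    (hAB : ((A ∩ B) ∩ T).Nonempty) :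
    IsDemand G T k r (A ∩ B) ∧ IsDemand G T k r (A ∪ B) := by
  obtain ⟨-, -, hrA, hcA⟩ := hA
  obtain ⟨-, -, hrB, hcB⟩ := hB
  have h1 : r ∉ cl G (A ∩ B) := by
    simp only [cl, Finset.mem_union, Finset.mem_inter, mem_nbr_aux] at hrA hrB ⊢
    grind
  have h2 : r ∉ cl G (A ∪ B) := by
    simp only [cl, Finset.mem_union, mem_nbr_aux] at hrA hrB ⊢
    grind
  have h3 : (T \ cl G (A ∩ B)).Nonempty := ⟨r, Finset.mem_sdiff.2 ⟨hr, h1⟩⟩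
  have h4 : (T \ cl G (A ∪ B)).Nonempty := ⟨r, Finset.mem_sdiff.2 ⟨hr, h2⟩⟩
  have h5 : ((A ∪ B) ∩ T).Nonempty := by
    obtain ⟨v, hv⟩ := hAB
    exact ⟨v, by simp only [Finset.mem_union, Finset.mem_inter] at hv ⊢; tauto⟩
  have h6 := hTconn _ hAB h3
  have h7 := hTconn _ h5 h4
  have h8 := nbr_submod_aux G T A B
  exact ⟨⟨hAB, h3, h1, by omega⟩, ⟨h5, h4, h2, by omega⟩⟩

theorem stmt_8 {V : Type*} [Fintype V] [DecidableEq V]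
    (G : SimpleGraph V) [DecidableRel G.Adj] (k : ℕ) (hk : 1 ≤ k)
    (T : Finset V)
    -- |Γ_T(Z)| ≥ k-1 for every Steiner T-cut Z
    (hTconn : ∀ Z : Finset V, (Z ∩ T).Nonempty → (T \ cl G Z).Nonempty →
      k - 1 ≤ (nbr G Z ∩ T).card)
    (r : V) (hr : r ∈ T)
    (Z : Finset V) (hZ : IsMinCore G T k r Z)
    (X Y : Finset V) (hX : X ∈ coreFam G T k r Z) (hY : Y ∈ coreFam G T k r Z) :
    X ∩ Y ∈ coreFam G T k r Z ∧ X ∪ Y ∈ coreFam G T k r Z := by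
  obtain ⟨⟨hXd, hXu⟩, hZX⟩ := hX
  obtain ⟨⟨hYd, hYu⟩, hZY⟩ := hY
  have hZI : Z ⊆ X ∩ Y := Finset.subset_inter hZX hZY
  have hne : ((X ∩ Y) ∩ T).Nonempty :=
    hZ.1.1.mono (Finset.inter_subset_inter_right hZI)
  obtain ⟨hI, hU⟩ := demand_uncross_aux G k T hTconn r hr X Y hXd hYd hne
  have key : ∀ (A W : Finset V), IsDemand G T k r A → IsMinCore G T k r W →
      ((W ∩ A) ∩ T).Nonempty → W ⊆ A := by
    intro A W hA hW h
    have h1 := (demand_uncross_aux G k T hTconn r hr W A hW.1 hA h).1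
    have h2 := hW.2 _ h1 Finset.inter_subset_left
    exact Finset.inter_eq_left.1 h2
  have hZU : Z ⊆ X ∪ Y := hZX.trans Finset.subset_union_left
  refine ⟨⟨⟨hI, Z, ⟨hZ, hZI⟩, ?_⟩, hZI⟩, ⟨⟨hU, Z, ⟨hZ, hZU⟩, ?_⟩, hZU⟩⟩
  · rintro W ⟨hW, hWI⟩
    exact hXu.unique ⟨hW, hWI.trans Finset.inter_subset_left⟩ ⟨hZ, hZX⟩
  · rintro W ⟨hW, hWU⟩
    obtain ⟨v, hv⟩ := hW.1.1
    obtain ⟨hvW, hvT⟩ := Finset.mem_inter.1 hv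
    rcases Finset.mem_union.1 (hWU hvW) with h | h
    · exact hXu.unique ⟨hW, key X W hXd hW ⟨v, by simp [hvW, hvT, h]⟩⟩ ⟨hZ, hZX⟩
    · exact hYu.unique ⟨hW, key Y W hYd hW ⟨v, by simp [hvW, hvT, h]⟩⟩ ⟨hZ, hZY⟩
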